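/- arXiv:2402.03983 — 2 statements merged into one kernel-verified Lean document; each statement's English description precedes it below -/
import Mathlib

section
/- Fix an integer m ≥ 2 and M = {M_β}_{|β|≤m} ⊆ ℂ. For each δ > 0 and each multi-index β with |β| ≤ m, the function φ_δ satisfies (D^β φ_δ)(0) = (−i)^{|β|} M_β. -/
open MeasureTheory Filter Topology
open scoped ENNReal NNReal

noncomputable section
open scoped Classical


abbrev Vd (d : ℕ) := EuclideanSpace ℝ (Fin d)

/-- The total variation measure `|μ|` of a complex measure (realized as the sum of the
total variations of its real and imaginary parts). -/
def ctv {d : ℕ} (μ : ComplexMeasure (Vd d)) : Measure (Vd d) :=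
  μ.re.totalVariation + μ.im.totalVariation

/-- Integral of a complex-valued function against a complex measure. -/
def cint {d : ℕ} (μ : ComplexMeasure (Vd d)) (f : Vd d → ℂ) : ℂ :=
  ((∫ x, f x ∂μ.re.toJordanDecomposition.posPart) -
    (∫ x, f x ∂μ.re.toJordanDecomposition.negPart)) +
  Complex.I * ((∫ x, f x ∂μ.im.toJordanDecomposition.posPart) -
    (∫ x, f x ∂μ.im.toJordanDecomposition.negPart))

/-- The Fourier transform `μ̂(ξ) = ∫ e^{-i x·ξ} dμ(x)` of a complex measure. -/
def ftc {d : ℕ} (μ : ComplexMeasure (Vd d)) (ξ : Vd d) : ℂ :=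
  cint μ (fun x => Complex.exp (-(Complex.I) * ((∑ i, x i * ξ i : ℝ) : ℂ)))

/-- The Fourier-based distance `d_m(μ,ν) = sup_{ξ ≠ 0} |μ̂(ξ)-ν̂(ξ)|/|ξ|^m` (valued in `ℝ≥0∞`). -/
def dm {d : ℕ} (m : ℕ) (μ ν : ComplexMeasure (Vd d)) : ℝ≥0∞ :=
  ⨆ ξ : {ξ : Vd d // ξ ≠ 0}, ENNReal.ofReal (‖ftc μ ξ - ftc ν ξ‖ / ‖(ξ : Vd d)‖ ^ m)

/-- The finite set of multi-indices `β ∈ ℕ^d` with `|β| ≤ m`. -/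
def multiIdx (d m : ℕ) : Finset (Fin d → ℕ) :=
  (Fintype.piFinset fun _ : Fin d => Finset.range (m + 1)).filter fun γ => ∑ i, γ i ≤ m

/-- The set `𝓜_m^M` of complex measures with finite `m`-th absolute moment and
moments prescribed by `M`. -/
def MomentSet (d m : ℕ) (M : (Fin d → ℕ) → ℂ) : Set (ComplexMeasure (Vd d)) :=
  {μ | (∫⁻ x, (‖x‖₊ : ℝ≥0∞) ^ m ∂(ctv μ)) < ⊤ ∧
       ∀ β : Fin d → ℕ, (∑ i, β i) ≤ m →
         cint μ (fun x => ∏ i, ((x i : ℂ)) ^ (β i)) = M β}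

/-- The polynomial `P(ξ) = Σ_{|γ|≤m} (M_γ/γ!) (-iξ)^γ`. -/
def Ppoly (d m : ℕ) (M : (Fin d → ℕ) → ℂ) (ξ : Vd d) : ℂ :=
  ∑ γ ∈ multiIdx d m,
    (M γ / ∏ i, (Nat.factorial (γ i) : ℂ)) * ∏ i, (-(Complex.I) * (ξ i)) ^ (γ i)

/-- The function `φ_δ`. -/
def phiFun (d m : ℕ) (M : (Fin d → ℕ) → ℂ) (δ : ℝ) (ξ : Vd d) : ℂ :=
  if ξ = 0 then Ppoly d m M 0
  else (Ppoly d m M ξ +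
      ((‖ξ‖ ^ (m + 2) * Real.sin (1 / ‖ξ‖ ^ m) * Real.exp (-δ / ‖ξ‖ ^ 2) : ℝ) : ℂ)) *
    ((Real.exp (-‖ξ‖ ^ (2 * m)) : ℝ) : ℂ)

/-- The function `f_δ`. -/
def fdelta (d m : ℕ) (δ : ℝ) (ξ : Vd d) : ℝ :=
  if ξ = 0 then 0
  else ‖ξ‖ ^ (m + 2) * Real.sin (1 / ‖ξ‖ ^ m) * Real.exp (-δ / ‖ξ‖ ^ 2)

/-- First-order partial derivative in the `i`-th coordinate direction. -/
def pderiv1 {d : ℕ} {F : Type*} [NormedAddCommGroup F] [NormedSpace ℝ F]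
    (i : Fin d) (f : Vd d → F) : Vd d → F :=
  fun ξ => fderiv ℝ f ξ (EuclideanSpace.single i 1)

/-- The multi-index partial derivative `D^β = ∂_{ξ_1}^{β_1} ⋯ ∂_{ξ_d}^{β_d}`. -/
def Dmulti {d : ℕ} {F : Type*} [NormedAddCommGroup F] [NormedSpace ℝ F]
    (β : Fin d → ℕ) (f : Vd d → F) : Vd d → F :=
  (List.ofFn fun i : Fin d => (pderiv1 i)^[β i]).foldr (fun op g => op g) f

/-
Write `w(ξ) = exp (-|ξ|^{2m})` and let `f_δ` be the oscillating term, so that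
`φ_δ - P = (w - 1) P + f_δ w`. The factor `w - 1` vanishes to order `2m ≥ m + 1` at the origin.
The term `f_δ` is smooth and flat there: `f_δ(ξ) = |ξ|^{2(m+2)} ψ(1/|ξ|)` with
`ψ(s) = s^{m+2} sin(s^m) exp(-δ s²)` a Schwartz function, and for every Schwartz `ψ` the gradient
of `ξ ↦ ψ(1/|ξ|)` is `ψ₁(1/|ξ|) ξ` with `ψ₁(s) = -s³ ψ'(s)` again Schwartz, so that an induction
gives all the derivatives. Finally `D^β` at a point is an evaluation of the Fréchet derivative of
order `|β|`, hence `D^β φ_δ` and `D^β P` agree at the origin, where the latter is a coefficient.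
-/

open scoped ContDiff SchwartzMap Polynomial

section VanishingOrder

variable {E F : Type*} [NormedAddCommGroup E] [NormedSpace ℝ E]
  [NormedAddCommGroup F] [NormedSpace ℝ F]

/-- The function `f` is smooth and vanishes to order `n` at `x`: its derivatives of order less
than `n`, including `f` itself, are zero at `x`. Smoothness is bundled so that the derivatives
are meaningful and the notion is stable under sums and products. -/
structure VanishesToOrder (n : ℕ) (f : E → F) (x : E) : Prop where
  contDiff : ContDiff ℝ ∞ f
  iteratedFDeriv_eq_zero : ∀ k < n, iteratedFDeriv ℝ k f x = 0

namespace VanishesToOrder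

variable {n p q : ℕ} {x : E}

theorem of_contDiff {f : E → F} (hf : ContDiff ℝ ∞ f) (x : E) : VanishesToOrder 0 f x :=
  ⟨hf, fun _ hk => absurd hk (Nat.not_lt_zero _)⟩

theorem mono {f : E → F} (hf : VanishesToOrder q f x) (hpq : p ≤ q) : VanishesToOrder p f x :=
  ⟨hf.contDiff, fun k hk => hf.iteratedFDeriv_eq_zero k (hk.trans_le hpq)⟩

theorem succ_iff {f : E → F} :
    VanishesToOrder (n + 1) f x ↔
      Differentiable ℝ f ∧ f x = 0 ∧ VanishesToOrder n (fderiv ℝ f) x := by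
  have hfderiv (k : ℕ) :
      iteratedFDeriv ℝ (k + 1) f x = 0 ↔ iteratedFDeriv ℝ k (fderiv ℝ f) x = 0 := by
    rw [← norm_eq_zero, ← norm_iteratedFDeriv_fderiv, norm_eq_zero]
  have hvalue : iteratedFDeriv ℝ 0 f x = 0 ↔ f x = 0 := by
    rw [← norm_eq_zero, norm_iteratedFDeriv_zero, norm_eq_zero]
  refine ⟨fun h => ?_, fun ⟨hdiff, hfx, hf'⟩ => ⟨?_, fun k hk => ?_⟩⟩
  · obtain ⟨hdiff, hsmooth⟩ := contDiff_infty_iff_fderiv.1 h.contDiff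
    exact ⟨hdiff, hvalue.1 (h.iteratedFDeriv_eq_zero 0 n.succ_pos), hsmooth,
      fun k hk => (hfderiv k).1 (h.iteratedFDeriv_eq_zero (k + 1) (Nat.succ_lt_succ hk))⟩
  · exact contDiff_infty_iff_fderiv.2 ⟨hdiff, hf'.contDiff⟩
  · cases k with
    | zero => exact hvalue.2 hfx
    | succ k => exact (hfderiv k).2 (hf'.iteratedFDeriv_eq_zero k (Nat.lt_of_succ_lt_succ hk))

theorem add {f g : E → F} (hf : VanishesToOrder n f x) (hg : VanishesToOrder n g x) :
    VanishesToOrder n (f + g) x := by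
  refine ⟨hf.contDiff.add hg.contDiff, fun k hk => ?_⟩
  rw [iteratedFDeriv_add_apply (hf.contDiff.contDiffAt.of_le (mod_cast le_top))
    (hg.contDiff.contDiffAt.of_le (mod_cast le_top)), hf.iteratedFDeriv_eq_zero k hk,
    hg.iteratedFDeriv_eq_zero k hk, add_zero]

theorem smul {f : E → ℝ} {g : E → F} (hf : VanishesToOrder p f x) (hg : VanishesToOrder q g x) :
    VanishesToOrder (p + q) (fun y => f y • g y) x := by
  refine ⟨hf.contDiff.smul hg.contDiff, fun k hk => ?_⟩
  have leibniz := norm_iteratedFDeriv_smul_le hf.contDiff hg.contDiff x (n := k)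
    (mod_cast le_top)
  have terms_zero : ∀ i ∈ Finset.range (k + 1),
      (k.choose i : ℝ) * ‖iteratedFDeriv ℝ i f x‖ * ‖iteratedFDeriv ℝ (k - i) g x‖ = 0 := by
    intro i _
    rcases lt_or_ge i p with hip | hpi
    · rw [hf.iteratedFDeriv_eq_zero i hip, norm_zero, mul_zero, zero_mul]
    · have hki : k - i < q := by grind
      rw [hg.iteratedFDeriv_eq_zero (k - i) hki, norm_zero, mul_zero]
  rwa [Finset.sum_eq_zero terms_zero, norm_le_zero_iff] at leibniz

theorem pow {f : E → ℝ} (hf : VanishesToOrder p f x) (n : ℕ) :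
    VanishesToOrder (n * p) (fun y => f y ^ n) x := by
  induction n with
  | zero => simpa only [zero_mul, pow_zero] using of_contDiff contDiff_const x
  | succ n ih => simpa only [Nat.succ_mul, smul_eq_mul, ← pow_succ] using ih.smul hf

theorem comp_sub {g : ℝ → ℝ} {f : E → ℝ} (hg : ContDiff ℝ ∞ g) (hf : VanishesToOrder n f x) :
    VanishesToOrder n (fun y => g (f y) - g 0) x := by
  have hsmooth := (hg.comp hf.contDiff).sub (contDiff_const (c := g 0))
  cases n with
  | zero => exact of_contDiff hsmooth x
  | succ n =>
    obtain ⟨hdiff, hfx, hf'⟩ := succ_iff.1 hf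
    obtain ⟨hgdiff, hg'⟩ := contDiff_infty_iff_deriv.1 hg
    have chain_rule : fderiv ℝ (fun y => g (f y) - g 0) = fun y => deriv g (f y) • fderiv ℝ f y :=
      funext fun y => (((hgdiff (f y)).hasDerivAt.comp_hasFDerivAt y
        (hdiff y).hasFDerivAt).sub_const (g 0)).fderiv
    refine succ_iff.2 ⟨hsmooth.differentiable (by simp), by rw [hfx, sub_self], ?_⟩
    rw [chain_rule]
    simpa only [zero_add, Function.comp_apply] using (of_contDiff (hg'.comp hf.contDiff) x).smul hf'

end VanishesToOrder

end VanishingOrder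

section Damping

variable {E : Type*} [NormedAddCommGroup E] [InnerProductSpace ℝ E]

theorem vanishesToOrder_norm_sq : VanishesToOrder 2 (fun ξ : E => ‖ξ‖ ^ 2) 0 := by
  obtain ⟨hdiff, hsmooth⟩ := contDiff_infty_iff_fderiv.1 (contDiff_norm_sq ℝ (E := E) (n := ∞))
  obtain ⟨hdiff', hsmooth'⟩ := contDiff_infty_iff_fderiv.1 hsmooth
  exact VanishesToOrder.succ_iff.2 ⟨hdiff, by simp,
    VanishesToOrder.succ_iff.2 ⟨hdiff', by simp, .of_contDiff hsmooth' 0⟩⟩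

theorem vanishesToOrder_exp_neg_norm_sq_pow_sub_one (m : ℕ) :
    VanishesToOrder (m * 2) (fun ξ : E => Real.exp (-(‖ξ‖ ^ 2) ^ m) - 1) 0 := by
  have hexp : ContDiff ℝ ∞ fun t : ℝ => Real.exp (-t) := by fun_prop
  simpa only [neg_zero, Real.exp_zero] using (vanishesToOrder_norm_sq.pow m).comp_sub hexp

end Damping

section OscillatingGaussian

theorem abs_pow_mul_exp_neg_sq_half_le (n : ℕ) (s : ℝ) :
    |s ^ n * Real.exp (-(s ^ 2 / 2))| ≤ 1 + 2 ^ n * n.factorial := by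
  have hexp_le_one : Real.exp (-(s ^ 2 / 2)) ≤ 1 := Real.exp_le_one_iff.2 (by nlinarith)
  have hsq : (s ^ 2) ^ n * Real.exp (-(s ^ 2 / 2)) ≤ 2 ^ n * n.factorial := by
    have h := Real.pow_div_factorial_le_exp (x := s ^ 2 / 2) (by positivity) n
    rw [div_pow, div_div, div_le_iff₀ (by positivity)] at h
    rw [Real.exp_neg, ← div_eq_mul_inv, div_le_iff₀ (Real.exp_pos _)]
    linarith
  have habs : |s| ^ n ≤ 1 + (s ^ 2) ^ n := by
    rw [← pow_mul, mul_comm, pow_mul, ← sq_abs (s ^ n), abs_pow]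
    nlinarith [sq_nonneg (|s| ^ n - 1)]
  rw [abs_mul, abs_pow, Real.abs_exp]
  calc |s| ^ n * Real.exp (-(s ^ 2 / 2))
      ≤ (1 + (s ^ 2) ^ n) * Real.exp (-(s ^ 2 / 2)) := by gcongr
    _ ≤ 1 + 2 ^ n * n.factorial := by linarith

theorem exists_abs_eval_mul_exp_neg_sq_half_le (p : ℝ[X]) :
    ∃ C, ∀ s : ℝ, |p.eval s * Real.exp (-(s ^ 2 / 2))| ≤ C := by
  induction p using Polynomial.induction_on' with
  | add p q hp hq =>
    obtain ⟨A, hA⟩ := hp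
    obtain ⟨B, hB⟩ := hq
    refine ⟨A + B, fun s => ?_⟩
    rw [Polynomial.eval_add, add_mul]
    exact (abs_add_le _ _).trans (add_le_add (hA s) (hB s))
  | monomial n a =>
    refine ⟨|a| * (1 + 2 ^ n * n.factorial), fun s => ?_⟩
    rw [Polynomial.eval_monomial, mul_assoc, abs_mul]
    gcongr
    exact abs_pow_mul_exp_neg_sq_half_le n s

/-- The standard Gaussian `s ↦ exp (-s² / 2)` as a Schwartz function on the line, normalized so
that its derivatives are Hermite polynomials times the function itself. -/
def stdGaussianSchwartz : 𝓢(ℝ, ℝ) where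
  toFun s := Real.exp (-(s ^ 2 / 2))
  smooth' := by fun_prop
  decay' k n := by
    obtain ⟨C, hC⟩ := exists_abs_eval_mul_exp_neg_sq_half_le
      (.X ^ k * (Polynomial.hermite n).map (Int.castRingHom ℝ))
    refine ⟨C, fun s => ?_⟩
    rw [norm_iteratedFDeriv_eq_norm_iteratedDeriv, iteratedDeriv_eq_iterate,
      Polynomial.deriv_gaussian_eq_hermite_mul_gaussian, ← norm_pow, ← norm_mul]
    convert hC s using 1
    simp [Polynomial.aeval_def, Polynomial.eval₂_eq_eval_map, mul_assoc]

theorem exists_schwartzMap_eq_gaussian {δ : ℝ} (hδ : 0 < δ) :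
    ∃ g : 𝓢(ℝ, ℝ), ∀ s, g s = Real.exp (-δ * s ^ 2) := by
  have hscale : √(2 * δ) ≠ 0 := by positivity
  refine ⟨SchwartzMap.compCLMOfContinuousLinearEquiv ℝ
    (ContinuousLinearEquiv.unitsEquivAut ℝ (Units.mk0 _ hscale)) stdGaussianSchwartz,
    fun s => ?_⟩
  change Real.exp (-((s * √(2 * δ)) ^ 2 / 2)) = _
  rw [mul_pow, Real.sq_sqrt (by positivity)]
  ring_nf

@[fun_prop]
theorem hasTemperateGrowth_sin : Function.HasTemperateGrowth Real.sin := by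
  refine ⟨Real.contDiff_sin, fun n => ⟨0, 1, fun s => ?_⟩⟩
  rw [norm_iteratedFDeriv_eq_norm_iteratedDeriv, pow_zero, one_mul]
  exact Real.abs_iteratedDeriv_sin_le_one n s

theorem exists_schwartzMap_eq_pow_mul_sin_mul_gaussian (k m : ℕ) {δ : ℝ} (hδ : 0 < δ) :
    ∃ ψ : 𝓢(ℝ, ℝ), ∀ s, ψ s = s ^ k * Real.sin (s ^ m) * Real.exp (-δ * s ^ 2) := by
  obtain ⟨g, hg⟩ := exists_schwartzMap_eq_gaussian hδ
  have hgrowth : Function.HasTemperateGrowth fun s : ℝ => s ^ k * Real.sin (s ^ m) := by fun_prop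
  refine ⟨SchwartzMap.smulLeftCLM ℝ (fun s : ℝ => s ^ k * Real.sin (s ^ m)) g, fun s => ?_⟩
  rw [SchwartzMap.smulLeftCLM_apply_apply hgrowth, hg, smul_eq_mul]

end OscillatingGaussian

-- As `‖0‖⁻¹ = 0`, the value of `ξ ↦ ψ ‖ξ‖⁻¹` at the origin is `ψ 0`, whereas its limit there
-- is the limit `0` of `ψ` at infinity.
theorem isBigO_comp_inv_norm {E : Type*} [NormedAddCommGroup E] {ψ : 𝓢(ℝ, ℝ)} (hψ : ψ 0 = 0)
    (k : ℕ) : (fun ξ : E => ψ ‖ξ‖⁻¹) =O[𝓝 0] fun ξ => ‖ξ‖ ^ k := by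
  obtain ⟨C, -, hC⟩ := ψ.decay k 0
  refine Asymptotics.IsBigO.of_bound C (Eventually.of_forall fun ξ => ?_)
  rcases eq_or_ne ξ 0 with rfl | hξ
  · have hC_nonneg : 0 ≤ C := (by positivity : (0 : ℝ) ≤ _).trans (hC 0)
    rw [norm_zero, inv_zero, hψ, norm_zero]
    positivity
  · have hnorm : 0 < ‖ξ‖ := norm_pos_iff.mpr hξ
    have decay := hC ‖ξ‖⁻¹
    rw [norm_iteratedFDeriv_zero, norm_inv, norm_norm, inv_pow,
      inv_mul_le_iff₀ (pow_pos hnorm k)] at decay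
    rwa [norm_pow, norm_norm, mul_comm]

section RadialInversion

variable {E : Type*} [NormedAddCommGroup E] [InnerProductSpace ℝ E]

/-- The Schwartz function `s ↦ -s³ ψ'(s)`. It is the radial factor of the gradient of
`ξ ↦ ψ(1/|ξ|)`, which equals `radialSlope ψ (1/|ξ|) ξ`. -/
def radialSlope (ψ : 𝓢(ℝ, ℝ)) : 𝓢(ℝ, ℝ) :=
  -SchwartzMap.smulLeftCLM ℝ (fun s : ℝ => s ^ 3) (SchwartzMap.derivCLM ℝ ℝ ψ)

theorem radialSlope_apply (ψ : 𝓢(ℝ, ℝ)) (s : ℝ) : radialSlope ψ s = -(s ^ 3 * deriv ψ s) := by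
  have hgrowth : Function.HasTemperateGrowth fun s : ℝ => s ^ 3 := by fun_prop
  simp [radialSlope, SchwartzMap.smulLeftCLM_apply_apply hgrowth]

theorem radialSlope_zero (ψ : 𝓢(ℝ, ℝ)) : radialSlope ψ 0 = 0 := by
  simp [radialSlope_apply]

theorem hasFDerivAt_inv_norm {ξ : E} (hξ : ξ ≠ 0) :
    HasFDerivAt (fun x : E => ‖x‖⁻¹) (-(‖ξ‖⁻¹ ^ 3) • innerSL ℝ ξ) ξ := by
  have hnorm : ‖ξ‖ ≠ 0 := norm_ne_zero_iff.mpr hξ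
  have hsqrt := (hasStrictFDerivAt_norm_sq ξ).hasFDerivAt.sqrt (pow_ne_zero 2 hnorm)
  simp only [Real.sqrt_sq (norm_nonneg _)] at hsqrt
  refine ((hasDerivAt_inv hnorm).comp_hasFDerivAt ξ hsqrt).congr_fderiv ?_
  rw [← Nat.cast_smul_eq_nsmul ℝ, smul_smul, smul_smul]
  congr 1
  push_cast
  field_simp

theorem hasFDerivAt_comp_inv_norm {ψ : 𝓢(ℝ, ℝ)} (hψ : ψ 0 = 0) (ξ : E) :
    HasFDerivAt (fun x : E => ψ ‖x‖⁻¹) (radialSlope ψ ‖ξ‖⁻¹ • innerSL ℝ ξ) ξ := by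
  rcases eq_or_ne ξ 0 with rfl | hξ
  · have hsq : (fun x : E => ψ ‖x‖⁻¹) =O[𝓝 0] fun x => ‖x - 0‖ ^ 2 := by
      simpa only [sub_zero] using isBigO_comp_inv_norm hψ 2
    simpa only [map_zero, smul_zero] using hsq.hasFDerivAt one_lt_two
  · refine ((ψ.hasDerivAt ‖ξ‖⁻¹).comp_hasFDerivAt ξ (hasFDerivAt_inv_norm hξ)).congr_fderiv ?_
    rw [radialSlope_apply, smul_smul]
    ring_nf

theorem fderiv_comp_inv_norm {ψ : 𝓢(ℝ, ℝ)} (hψ : ψ 0 = 0) :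
    fderiv ℝ (fun ξ : E => ψ ‖ξ‖⁻¹) = fun ξ => radialSlope ψ ‖ξ‖⁻¹ • innerSL ℝ ξ :=
  funext fun ξ => (hasFDerivAt_comp_inv_norm hψ ξ).fderiv

theorem differentiable_comp_inv_norm {ψ : 𝓢(ℝ, ℝ)} (hψ : ψ 0 = 0) :
    Differentiable ℝ fun ξ : E => ψ ‖ξ‖⁻¹ :=
  fun ξ => (hasFDerivAt_comp_inv_norm hψ ξ).differentiableAt

theorem contDiff_comp_inv_norm {ψ : 𝓢(ℝ, ℝ)} (hψ : ψ 0 = 0) :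
    ContDiff ℝ ∞ fun ξ : E => ψ ‖ξ‖⁻¹ := by
  refine contDiff_infty.2 fun n => ?_
  induction n generalizing ψ with
  | zero => exact contDiff_zero.2 (differentiable_comp_inv_norm hψ).continuous
  | succ n ih =>
    refine (contDiff_succ_iff_fderiv (n := n)).2 ⟨differentiable_comp_inv_norm hψ, by simp, ?_⟩
    rw [fderiv_comp_inv_norm hψ]
    exact (ih (radialSlope_zero ψ)).smul (innerSL ℝ).contDiff

theorem vanishesToOrder_comp_inv_norm {ψ : 𝓢(ℝ, ℝ)} (hψ : ψ 0 = 0) (n : ℕ) :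
    VanishesToOrder n (fun ξ : E => ψ ‖ξ‖⁻¹) 0 := by
  induction n generalizing ψ with
  | zero => exact .of_contDiff (contDiff_comp_inv_norm hψ) 0
  | succ n ih =>
    refine VanishesToOrder.succ_iff.2
      ⟨differentiable_comp_inv_norm hψ, by rw [norm_zero, inv_zero, hψ], ?_⟩
    rw [fderiv_comp_inv_norm hψ]
    exact (ih (radialSlope_zero ψ)).smul (.of_contDiff (innerSL ℝ).contDiff 0)

end RadialInversion

section MultiIndexDerivative

variable {d : ℕ} {F : Type*} [NormedAddCommGroup F] [NormedSpace ℝ F]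

theorem Dmulti_induction {p : (Fin d → ℕ) → ((Vd d → F) → Vd d → F) → Prop} (zero : p 0 id)
    (succ : ∀ σ T i, p σ T → p (σ + Pi.single i 1) fun f => pderiv1 i (T f)) (β : Fin d → ℕ) :
    p β (Dmulti β) := by
  have iterate (i : Fin d) (n : ℕ) {σ T} (hT : p σ T) :
      p (Pi.single i n + σ) fun f => (pderiv1 i)^[n] (T f) := by
    induction n with
    | zero => simpa using hT
    | succ n ih =>
      simpa only [Function.iterate_succ_apply', Pi.single_add, add_right_comm] using succ _ _ i ih
  have compose (l : List (Fin d)) :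
      p (l.map fun i => Pi.single i (β i)).sum
        fun f => (l.map fun i => (pderiv1 i)^[β i]).foldr (fun op g => op g) f := by
    induction l with
    | nil => exact zero
    | cons i l ih =>
      simpa only [List.map_cons, List.sum_cons, List.foldr_cons] using iterate i (β i) ih
  have h := compose (List.finRange d)
  rw [← List.ofFn_eq_map, List.sum_ofFn, Finset.univ_sum_single, ← List.ofFn_eq_map] at h
  exact h

theorem Dmulti_zero (f : Vd d → F) : Dmulti 0 f = f :=
  Dmulti_induction (p := fun σ T => σ = 0 → T f = f) (fun _ => rfl)
    (fun _ _ i _ h => absurd (congrFun h i) (by simp)) 0 rfl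

theorem exists_Dmulti_eq_iteratedFDeriv (β : Fin d → ℕ) :
    ∃ w : Fin (∑ i, β i) → Vd d, ∀ f : Vd d → F, ContDiff ℝ ∞ f → ∀ ξ,
      Dmulti β f ξ = iteratedFDeriv ℝ (∑ i, β i) f ξ w := by
  -- A free order `n` avoids transporting `w` along equalities of sums of exponents.
  refine Dmulti_induction (F := F) (p := fun σ T => ∀ n, ∑ i, σ i = n → ∃ w : Fin n → Vd d,
    ∀ f : Vd d → F, ContDiff ℝ ∞ f → ∀ ξ, T f ξ = iteratedFDeriv ℝ n f ξ w) ?_ ?_ β _ rfl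
  · intro n hn
    obtain rfl : n = 0 := by simpa using hn.symm
    exact ⟨0, fun f _ ξ => rfl⟩
  · rintro σ T i hT _ rfl
    obtain ⟨w, hw⟩ := hT _ rfl
    have hsum : ∑ j, (σ + Pi.single i 1 : Fin d → ℕ) j = ∑ j, σ j + 1 := by
      simp [Finset.sum_add_distrib]
    rw [hsum]
    refine ⟨Fin.cons (EuclideanSpace.single i 1) w, fun f hf ξ => ?_⟩
    have hdiff : DifferentiableAt ℝ (iteratedFDeriv ℝ (∑ j, σ j) f) ξ :=
      hf.differentiable_iteratedFDeriv (mod_cast ENat.natCast_lt_top _) ξ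
    rw [iteratedFDeriv_succ_apply_left, Fin.cons_zero, Fin.tail_cons,
      ← fderiv_continuousMultilinear_apply_const_apply hdiff, ← funext (hw f hf)]
    rfl

theorem Dmulti_sum_smul {𝕜 ι : Type*} [NormedField 𝕜] [NormedSpace 𝕜 F] [SMulCommClass ℝ 𝕜 F]
    (s : Finset ι) (c : ι → 𝕜) {f : ι → Vd d → F} (hf : ∀ j, ContDiff ℝ ∞ (f j))
    (β : Fin d → ℕ) (ξ : Vd d) :
    Dmulti β (fun x => ∑ j ∈ s, c j • f j x) ξ = ∑ j ∈ s, c j • Dmulti β (f j) ξ := by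
  obtain ⟨w, hw⟩ := exists_Dmulti_eq_iteratedFDeriv (F := F) β
  have hfξ (j : ι) : ContDiffAt ℝ (∑ i, β i : ℕ) (f j) ξ :=
    (hf j).contDiffAt.of_le (mod_cast le_top)
  rw [hw _ (ContDiff.sum fun j _ => (hf j).const_smul (c j)),
    iteratedFDeriv_fun_sum_apply fun j _ => (hfξ j).const_smul (c j), sum_apply]
  refine Finset.sum_congr rfl fun j _ => ?_
  rw [iteratedFDeriv_const_smul_apply' (hfξ j), smul_apply, hw _ (hf j)]

theorem Dmulti_add_of_vanishesToOrder {f r : Vd d → F} {β : Fin d → ℕ} {n : ℕ} {ξ : Vd d}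
    (hf : ContDiff ℝ ∞ f) (hr : VanishesToOrder n r ξ) (hβ : ∑ i, β i < n) :
    Dmulti β (f + r) ξ = Dmulti β f ξ := by
  obtain ⟨w, hw⟩ := exists_Dmulti_eq_iteratedFDeriv (F := F) β
  rw [hw (f + r) (hf.add hr.contDiff), hw f hf,
    iteratedFDeriv_add_apply (hf.contDiffAt.of_le (mod_cast le_top))
      (hr.contDiff.contDiffAt.of_le (mod_cast le_top)),
    hr.iteratedFDeriv_eq_zero _ hβ, add_zero]

end MultiIndexDerivative

section ProductOfCoordinateFunctions

variable {d : ℕ} {A : Type*} [NormedCommRing A] [NormedAlgebra ℝ A]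

theorem pderiv1_prod_coord {f : Fin d → ℝ → A} (hf : ∀ j, Differentiable ℝ (f j)) (i : Fin d) :
    pderiv1 i (fun ξ : Vd d => ∏ j, f j (ξ j)) =
      fun ξ => ∏ j, Function.update f i (deriv (f i)) j (ξ j) := by
  funext ξ
  have hcoord (j : Fin d) : HasFDerivAt (fun x : Vd d => f j (x j))
      ((EuclideanSpace.proj j : Vd d →L[ℝ] ℝ).smulRight (deriv (f j) (ξ j))) ξ :=
    ((hf j (ξ j)).hasDerivAt.hasFDerivAt.comp ξ
      (EuclideanSpace.proj j : Vd d →L[ℝ] ℝ).hasFDerivAt).congr_fderiv (by ext v; simp)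
  have hprod := HasFDerivAt.finsetProd (u := Finset.univ) fun j _ => hcoord j
  have herase : ∏ j ∈ Finset.univ.erase i, Function.update f i (deriv (f i)) j (ξ j) =
      ∏ j ∈ Finset.univ.erase i, f j (ξ j) :=
    Finset.prod_congr rfl fun j hj => by rw [Function.update_of_ne (Finset.ne_of_mem_erase hj)]
  rw [pderiv1, hprod.fderiv, sum_apply, Finset.sum_eq_single i]
  · rw [← Finset.mul_prod_erase _ _ (Finset.mem_univ i), Function.update_self, herase]
    simp [mul_comm]
  · intro j _ hji
    simp [hji]
  · simp

theorem Dmulti_prod_coord {f : Fin d → ℝ → A} (hf : ∀ j, ContDiff ℝ ∞ (f j)) (β : Fin d → ℕ) :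
    Dmulti β (fun ξ : Vd d => ∏ j, f j (ξ j)) =
      fun ξ => ∏ j, iteratedDeriv (β j) (f j) (ξ j) := by
  refine Dmulti_induction (p := fun σ T => T (fun ξ : Vd d => ∏ j, f j (ξ j)) =
      fun ξ => ∏ j, iteratedDeriv (σ j) (f j) (ξ j)) ?_ ?_ β
  · simp
  · intro σ T i hT
    have hdiff (j : Fin d) : Differentiable ℝ (iteratedDeriv (σ j) (f j)) :=
      (hf j).differentiable_iteratedDeriv _ (mod_cast ENat.natCast_lt_top _)
    change pderiv1 i (T _) = _
    rw [hT, pderiv1_prod_coord hdiff, ← iteratedDeriv_succ]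
    funext ξ
    refine Finset.prod_congr rfl fun j _ => ?_
    rcases eq_or_ne j i with rfl | hji
    · simp
    · simp [hji]

end ProductOfCoordinateFunctions

section MomentPolynomial

variable {d : ℕ}

theorem iteratedDeriv_mul_ofReal_pow_zero (c : ℂ) (n g : ℕ) :
    iteratedDeriv n (fun x : ℝ => (c * x) ^ g) 0 = if n = g then n.factorial * c ^ n else 0 := by
  have hsmul : (fun x : ℝ => (c * x) ^ g) = fun x : ℝ => x ^ g • c ^ g := by
    funext x
    rw [Complex.real_smul, Complex.ofReal_pow, mul_pow, mul_comm]
  rw [hsmul, iteratedDeriv_smul_const (by fun_prop), iteratedDeriv_fun_pow_zero]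
  split_ifs with h
  · simp [h]
  · simp

theorem contDiff_prod_mul_coord_pow (c : ℂ) (γ : Fin d → ℕ) :
    ContDiff ℝ ∞ fun ξ : Vd d => ∏ i, (c * ξ i) ^ γ i := by
  have hcoord (i : Fin d) : ContDiff ℝ ∞ fun ξ : Vd d => (ξ i : ℂ) :=
    Complex.ofRealCLM.contDiff.comp (EuclideanSpace.proj i : Vd d →L[ℝ] ℝ).contDiff
  fun_prop

theorem Dmulti_prod_mul_coord_pow_zero (c : ℂ) (β γ : Fin d → ℕ) :
    Dmulti β (fun ξ : Vd d => ∏ i, (c * ξ i) ^ γ i) 0 =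
      if γ = β then (∏ i, ((β i).factorial : ℂ)) * c ^ (∑ i, β i) else 0 := by
  have hsmooth (i : Fin d) : ContDiff ℝ ∞ fun x : ℝ => (c * x) ^ γ i :=
    (contDiff_const.mul Complex.ofRealCLM.contDiff).pow _
  rw [Dmulti_prod_coord hsmooth]
  simp only [PiLp.zero_apply, iteratedDeriv_mul_ofReal_pow_zero]
  split_ifs with h
  · simp [h, Finset.prod_mul_distrib, Finset.prod_pow_eq_pow_sum]
  · obtain ⟨i, hi⟩ := Function.ne_iff.mp h
    exact Finset.prod_eq_zero (Finset.mem_univ i) (if_neg hi.symm)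

theorem mem_multiIdx {m : ℕ} {γ : Fin d → ℕ} : γ ∈ multiIdx d m ↔ ∑ i, γ i ≤ m := by
  simp only [multiIdx, Finset.mem_filter, Fintype.mem_piFinset, Finset.mem_range, Nat.lt_succ_iff,
    and_iff_right_iff_imp]
  exact fun hγ i => (Finset.single_le_sum (fun _ _ => Nat.zero_le _) (Finset.mem_univ i)).trans hγ

theorem contDiff_Ppoly (d m : ℕ) (M : (Fin d → ℕ) → ℂ) : ContDiff ℝ ∞ (Ppoly d m M) :=
  ContDiff.sum fun γ _ => contDiff_const.mul (contDiff_prod_mul_coord_pow (-Complex.I) γ)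

theorem Dmulti_Ppoly_zero {m : ℕ} (M : (Fin d → ℕ) → ℂ) {β : Fin d → ℕ} (hβ : ∑ i, β i ≤ m) :
    Dmulti β (Ppoly d m M) 0 = (-Complex.I) ^ (∑ i, β i) * M β := by
  have hfactorial : ∏ i, ((β i).factorial : ℂ) ≠ 0 :=
    Finset.prod_ne_zero_iff.2 fun i _ => Nat.cast_ne_zero.2 (β i).factorial_ne_zero
  calc Dmulti β (Ppoly d m M) 0
      = ∑ γ ∈ multiIdx d m, (M γ / ∏ i, ((γ i).factorial : ℂ)) •
          Dmulti β (fun ξ : Vd d => ∏ i, (-Complex.I * ξ i) ^ γ i) 0 :=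
        Dmulti_sum_smul _ (fun γ => M γ / ∏ i, ((γ i).factorial : ℂ))
          (contDiff_prod_mul_coord_pow (-Complex.I)) β 0
    _ = (M β / ∏ i, ((β i).factorial : ℂ)) •
          ((∏ i, ((β i).factorial : ℂ)) * (-Complex.I) ^ (∑ i, β i)) := by
        simp only [Dmulti_prod_mul_coord_pow_zero, smul_ite, smul_zero]
        rw [Finset.sum_ite_eq_of_mem' _ _ _ (mem_multiIdx.2 hβ)]
    _ = (-Complex.I) ^ (∑ i, β i) * M β := by
        rw [smul_eq_mul, ← mul_assoc, div_mul_cancel₀ _ hfactorial, mul_comm]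

end MomentPolynomial

section Remainder

variable {m : ℕ} {δ : ℝ}

theorem exists_schwartzMap_fdelta_eq (d m : ℕ) (hδ : 0 < δ) :
    ∃ ψ : 𝓢(ℝ, ℝ), ψ 0 = 0 ∧ fdelta d m δ = fun ξ => (‖ξ‖ ^ 2) ^ (m + 2) • ψ ‖ξ‖⁻¹ := by
  obtain ⟨ψ, hψ⟩ := exists_schwartzMap_eq_pow_mul_sin_mul_gaussian (m + 2) m hδ
  refine ⟨ψ, by simp [hψ], funext fun ξ => ?_⟩
  rcases eq_or_ne ξ 0 with rfl | hξ
  · simp [fdelta]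
  · have hpow : (‖ξ‖ ^ 2) ^ (m + 2) * ‖ξ‖⁻¹ ^ (m + 2) = ‖ξ‖ ^ (m + 2) := by
      rw [← mul_pow, sq, mul_inv_cancel_right₀ (norm_ne_zero_iff.mpr hξ)]
    rw [fdelta, if_neg hξ, hψ, smul_eq_mul, ← hpow, one_div, ← inv_pow, div_eq_mul_inv, ← inv_pow]
    ring

theorem vanishesToOrder_fdelta (d m : ℕ) (hδ : 0 < δ) (n : ℕ) :
    VanishesToOrder n (fdelta d m δ) 0 := by
  obtain ⟨ψ, hψ, hf⟩ := exists_schwartzMap_fdelta_eq d m hδ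
  have hpow : VanishesToOrder 0 (fun ξ : Vd d => (‖ξ‖ ^ 2) ^ (m + 2)) 0 :=
    .of_contDiff ((contDiff_norm_sq ℝ).pow _) 0
  rw [hf]
  simpa only [zero_add] using hpow.smul (vanishesToOrder_comp_inv_norm hψ n)

/-- The difference `φ_δ - P`, written as `(w - 1) P + f_δ w` with the damping factor
`w(ξ) = exp (-|ξ|^{2m})`. -/
def phiRemainder (d m : ℕ) (M : (Fin d → ℕ) → ℂ) (δ : ℝ) : Vd d → ℂ :=
  (fun ξ => (Real.exp (-(‖ξ‖ ^ 2) ^ m) - 1) • Ppoly d m M ξ) +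
    fun ξ => fdelta d m δ ξ • (Real.exp (-(‖ξ‖ ^ 2) ^ m) : ℂ)

theorem phiFun_eq_Ppoly_add_phiRemainder {d : ℕ} (hm : m ≠ 0) (M : (Fin d → ℕ) → ℂ) (δ : ℝ) :
    phiFun d m M δ = Ppoly d m M + phiRemainder d m M δ := by
  funext ξ
  rcases eq_or_ne ξ 0 with rfl | hξ
  · simp [phiFun, phiRemainder, fdelta, hm]
  · simp only [phiFun, phiRemainder, fdelta, if_neg hξ, Pi.add_apply, Complex.real_smul, ← pow_mul]
    push_cast
    ring

theorem vanishesToOrder_phiRemainder {d : ℕ} (hm : m ≠ 0) (M : (Fin d → ℕ) → ℂ) (hδ : 0 < δ) :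
    VanishesToOrder (m + 1) (phiRemainder d m M δ) 0 := by
  have hw : ContDiff ℝ ∞ fun ξ : Vd d => (Real.exp (-(‖ξ‖ ^ 2) ^ m) : ℂ) :=
    Complex.ofRealCLM.contDiff.comp ((contDiff_norm_sq ℝ).pow m).neg.exp
  have hdamping := (vanishesToOrder_exp_neg_norm_sq_pow_sub_one m).smul
    (.of_contDiff (contDiff_Ppoly d m M) 0)
  have hflat := (vanishesToOrder_fdelta d m hδ (m + 1)).smul (.of_contDiff hw 0)
  exact (hdamping.mono (by omega)).add hflat

end Remainder

theorem stmt6_general (d m : ℕ) (M : (Fin d → ℕ) → ℂ) (δ : ℝ) (hδ : 0 < δ)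
    (β : Fin d → ℕ) (hβ : (∑ i, β i) ≤ m) :
    Dmulti β (phiFun d m M δ) 0 = (-Complex.I) ^ (∑ i, β i) * M β := by
  rw [← Dmulti_Ppoly_zero M hβ]
  rcases eq_or_ne m 0 with rfl | hm
  -- For `m = 0` the function `φ_δ` is not continuous at the origin, but only its value matters.
  · obtain rfl : β = 0 := by simpa [funext_iff] using hβ
    rw [Dmulti_zero, Dmulti_zero, phiFun, if_pos rfl]
  · rw [phiFun_eq_Ppoly_add_phiRemainder hm]
    exact Dmulti_add_of_vanishesToOrder (contDiff_Ppoly d m M)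
      (vanishesToOrder_phiRemainder hm M hδ) (Nat.lt_succ_of_le hβ)

/-- For `m ≥ 2`, prescribed moments `M`, `δ > 0` and every multi-index `β`
with `|β| ≤ m`, one has `(D^β φ_δ)(0) = (-i)^{|β|} M_β`. -/
theorem stmt6 (d m : ℕ) (hm : 2 ≤ m) (M : (Fin d → ℕ) → ℂ) (δ : ℝ) (hδ : 0 < δ)
    (β : Fin d → ℕ) (hβ : (∑ i, β i) ≤ m) :
    Dmulti β (phiFun d m M δ) 0 = (-Complex.I) ^ (∑ i, β i) * M β :=
  stmt6_general d m M δ hδ β hβ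

end
end

section
/- Fix an integer m ≥ 2 and M = {M_β}_{|β|≤m} ⊆ ℂ, and for δ > 0 let μ_{1/δ} ∈ 𝓜_m^M be the measure whose Fourier transform is φ_δ. Then for all δ_1, δ_2 > 0, d_m(μ_{1/δ_1}, μ_{1/δ_2}) ≤ |δ_1 − δ_2|. -/
open MeasureTheory Filter Topology
open scoped ENNReal NNReal

noncomputable section
open scoped Classical


/-!
The polynomial `P` cancels in `φ_{δ₁} - φ_{δ₂}`, leaving `f_{δ₁} - f_{δ₂}` times the damping factor
`exp (-|ξ|^(2m)) ≤ 1`. Since `exp` is `1`-Lipschitz on `(-∞, 0]`, the numbers `exp (-δᵢ / |ξ|²)`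
differ by at most `|δ₁ - δ₂| / |ξ|²`, and the factor `|ξ|^(m + 2)` turns this bound into
`|δ₁ - δ₂| |ξ|^m`.
-/

theorem abs_exp_sub_exp_le {a b c : ℝ} (ha : a ≤ c) (hb : b ≤ c) :
    |Real.exp a - Real.exp b| ≤ Real.exp c * |a - b| := by
  have norm_deriv_le : ∀ x ∈ Set.Iic c, ‖deriv Real.exp x‖ ≤ Real.exp c := fun x hx => by
    rw [Real.deriv_exp, Real.norm_of_nonneg (Real.exp_nonneg x)]
    exact Real.exp_le_exp.2 hx
  exact (convex_Iic c).norm_image_sub_le_of_norm_deriv_le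
    (fun x _ => Real.differentiableAt_exp) norm_deriv_le hb ha

theorem abs_exp_neg_div_sub_exp_neg_div_le {a b r : ℝ} (ha : 0 ≤ a) (hb : 0 ≤ b) (hr : 0 ≤ r) :
    |Real.exp (-a / r) - Real.exp (-b / r)| ≤ |a - b| / r :=
  calc |Real.exp (-a / r) - Real.exp (-b / r)|
      ≤ Real.exp 0 * |-a / r - -b / r| :=
        abs_exp_sub_exp_le (div_nonpos_of_nonpos_of_nonneg (neg_nonpos.2 ha) hr)
          (div_nonpos_of_nonpos_of_nonneg (neg_nonpos.2 hb) hr)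
    _ = |a - b| / r := by
        rw [Real.exp_zero, one_mul, ← sub_div, abs_div, abs_of_nonneg hr, neg_sub_neg,
          abs_sub_comm]

theorem dm_le_ofReal {d m : ℕ} {μ ν : ComplexMeasure (Vd d)} {C : ℝ}
    (h : ∀ ξ : Vd d, ξ ≠ 0 → ‖ftc μ ξ - ftc ν ξ‖ ≤ C * ‖ξ‖ ^ m) :
    dm m μ ν ≤ ENNReal.ofReal C :=
  iSup_le fun ⟨ξ, hξ⟩ => ENNReal.ofReal_le_ofReal <|
    (div_le_iff₀ (pow_pos (norm_pos_iff.2 hξ) m)).2 (h ξ hξ)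

theorem abs_fdelta_sub_fdelta_le {d m : ℕ} {δ₁ δ₂ : ℝ} (h₁ : 0 ≤ δ₁) (h₂ : 0 ≤ δ₂) (ξ : Vd d) :
    |fdelta d m δ₁ ξ - fdelta d m δ₂ ξ| ≤ |δ₁ - δ₂| * ‖ξ‖ ^ m := by
  rcases eq_or_ne ξ 0 with rfl | hξ
  · simp only [fdelta, if_pos, sub_self, abs_zero]
    positivity
  have norm_ne_zero : ‖ξ‖ ≠ 0 := norm_ne_zero_iff.2 hξ
  have exp_sub_le := abs_exp_neg_div_sub_exp_neg_div_le h₁ h₂ (sq_nonneg ‖ξ‖)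
  have abs_sin_le := Real.abs_sin_le_one (1 / ‖ξ‖ ^ m)
  calc |fdelta d m δ₁ ξ - fdelta d m δ₂ ξ|
      = ‖ξ‖ ^ (m + 2) * |Real.sin (1 / ‖ξ‖ ^ m)| *
          |Real.exp (-δ₁ / ‖ξ‖ ^ 2) - Real.exp (-δ₂ / ‖ξ‖ ^ 2)| := by
        rw [fdelta, fdelta, if_neg hξ, if_neg hξ, ← mul_sub, abs_mul, abs_mul, abs_pow, abs_norm]
    _ ≤ ‖ξ‖ ^ (m + 2) * 1 * (|δ₁ - δ₂| / ‖ξ‖ ^ 2) := by gcongr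
    _ = |δ₁ - δ₂| * ‖ξ‖ ^ m := by
        rw [pow_add]
        field_simp

theorem phiFun_of_ne_zero {d m : ℕ} (M : (Fin d → ℕ) → ℂ) (δ : ℝ) {ξ : Vd d} (hξ : ξ ≠ 0) :
    phiFun d m M δ ξ =
      (Ppoly d m M ξ + (fdelta d m δ ξ : ℂ)) * (Real.exp (-‖ξ‖ ^ (2 * m)) : ℂ) := by
  rw [phiFun, fdelta, if_neg hξ, if_neg hξ]

theorem norm_phiFun_sub_phiFun_le {d m : ℕ} (M : (Fin d → ℕ) → ℂ) (δ₁ δ₂ : ℝ) (ξ : Vd d) :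
    ‖phiFun d m M δ₁ ξ - phiFun d m M δ₂ ξ‖ ≤ |fdelta d m δ₁ ξ - fdelta d m δ₂ ξ| := by
  rcases eq_or_ne ξ 0 with rfl | hξ
  · simp only [phiFun, if_pos, sub_self, norm_zero, abs_nonneg]
  have exp_le_one : Real.exp (-‖ξ‖ ^ (2 * m)) ≤ 1 :=
    Real.exp_le_one_iff.2 (neg_nonpos.2 (by positivity))
  calc ‖phiFun d m M δ₁ ξ - phiFun d m M δ₂ ξ‖
      = |fdelta d m δ₁ ξ - fdelta d m δ₂ ξ| * Real.exp (-‖ξ‖ ^ (2 * m)) := by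
        rw [phiFun_of_ne_zero M δ₁ hξ, phiFun_of_ne_zero M δ₂ hξ, ← sub_mul,
          add_sub_add_left_eq_sub, ← Complex.ofReal_sub, ← Complex.ofReal_mul, Complex.norm_real,
          Real.norm_eq_abs, abs_mul, Real.abs_exp]
    _ ≤ |fdelta d m δ₁ ξ - fdelta d m δ₂ ξ| := mul_le_of_le_one_right (abs_nonneg _) exp_le_one

theorem stmt7_general {d m : ℕ} {M : (Fin d → ℕ) → ℂ} {μ ν : ComplexMeasure (Vd d)} {δ₁ δ₂ : ℝ}
    (h₁ : 0 ≤ δ₁) (h₂ : 0 ≤ δ₂) (hμ : ftc μ = phiFun d m M δ₁) (hν : ftc ν = phiFun d m M δ₂) :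
    dm m μ ν ≤ ENNReal.ofReal |δ₁ - δ₂| :=
  dm_le_ofReal fun ξ _ => by
    rw [hμ, hν]
    exact (norm_phiFun_sub_phiFun_le M δ₁ δ₂ ξ).trans (abs_fdelta_sub_fdelta_le h₁ h₂ ξ)

/-- For `m ≥ 2` and prescribed moments `M`, let `μ_{1/δ} ∈ 𝓜_m^M` (for `δ > 0`)
be the measure whose Fourier transform is `φ_δ`. Then `d_m(μ_{1/δ₁}, μ_{1/δ₂}) ≤ |δ₁ - δ₂|`
for all `δ₁, δ₂ > 0`. -/
theorem stmt7 (d m : ℕ) (hm : 2 ≤ m) (M : (Fin d → ℕ) → ℂ)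
    (μ : ℝ → ComplexMeasure (Vd d))
    (hμ : ∀ δ : ℝ, 0 < δ → μ δ ∈ MomentSet d m M ∧ ftc (μ δ) = phiFun d m M δ)
    (δ₁ δ₂ : ℝ) (h₁ : 0 < δ₁) (h₂ : 0 < δ₂) :
    dm m (μ δ₁) (μ δ₂) ≤ ENNReal.ofReal |δ₁ - δ₂| :=
  stmt7_general h₁.le h₂.le (hμ δ₁ h₁).2 (hμ δ₂ h₂).2

end
end
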